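/- Let (𝓑₁, 𝓑₀) be a Rota-Baxter operator on a crossed module of groups (H, G, t, Φ). In the category associated with (H, G, t, Φ) (objects G, morphisms G × H, source 𝔰(a, p) = a, target 𝔱(a, p) = t(p)·a, identity 1_a = (a, e_H), and composition (a, p) ∘ (b, q) = (b, p·q) defined when t(q)·b = a), define 𝓑(a, p) = (𝓑₀(a), Φ(𝓑₀(a))(𝓑₁(Φ(𝓑₀(a)⁻¹·a⁻¹)(p)))). Then (𝓑, 𝓑₀) is a functor from this category to itself; explicitly: (1) 𝔰(𝓑(a, p)) = 𝓑₀(𝔰(a, p)) for all (a, p); (2) 𝔱(𝓑(a, p)) = 𝓑₀(𝔱(a, p)) for all (a, p); (3) 𝓑(a, e_H) = (𝓑₀(a), e_H), i.e. 𝓑(1_a) = 1_{𝓑₀(a)}; (4) whenever t(k)·b = a, the composite 𝓑(a, h) ∘ 𝓑(b, k) is defined and equals 𝓑((a, h) ∘ (b, k)). -/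

import Mathlib

/-- A crossed module of groups. -/
structure IsCrossedModule {H G : Type*} [Group H] [Group G]
    (t : H → G) (Φ : G → H → H) : Prop where
  t_mul : ∀ p q : H, t (p * q) = t p * t q
  Φ_mul_hom : ∀ (a : G) (p q : H), Φ a (p * q) = Φ a p * Φ a q
  Φ_bij : ∀ a : G, Function.Bijective (Φ a)
  Φ_one : ∀ p : H, Φ 1 p = p
  Φ_mul : ∀ (a b : G) (p : H), Φ (a * b) p = Φ a (Φ b p)
  peiffer : ∀ p q : H, Φ (t p) q = p * q * p⁻¹
  equivar : ∀ (a : G) (p : H), t (Φ a p) = a * t p * a⁻¹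

/-- Rota-Baxter operator on a group. -/
def IsRotaBaxter {G : Type*} [Group G] (B : G → G) : Prop :=
  ∀ a b : G, B a * B b = B (a * B a * b * (B a)⁻¹)

/-- Rota-Baxter operator on a crossed module of groups. -/
structure IsCMRotaBaxter {H G : Type*} [Group H] [Group G]
    (t : H → G) (Φ : G → H → H) (B₁ : H → H) (B₀ : G → G) : Prop where
  rb₁ : IsRotaBaxter B₁
  rb₀ : IsRotaBaxter B₀
  t_comm : ∀ p : H, t (B₁ p) = B₀ (t p)
  compat : ∀ (a : G) (p : H),
    Φ (B₀ a) (B₁ p) = B₁ (Φ (a * B₀ a) (p * B₁ p) * (Φ (B₀ a) (B₁ p))⁻¹)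

/-- The semidirect product multiplication `(a,p)·_Φ(b,q) = (a·b, p·Φ(a)q)` on `G × H`. -/
def sdpMul {H G : Type*} [Group H] [Group G] (Φ : G → H → H) (m n : G × H) : G × H :=
  (m.1 * n.1, m.2 * Φ m.1 n.2)

/-- The inverse for `sdpMul`. -/
def sdpInv {H G : Type*} [Group H] [Group G] (Φ : G → H → H) (m : G × H) : G × H :=
  (m.1⁻¹, Φ m.1⁻¹ m.2⁻¹)

/-- The operator `𝓑(a,p) = (B₀(a), Φ(B₀(a))(B₁(Φ(B₀(a)⁻¹·a⁻¹)(p))))` on `G ⋉_Φ H`. -/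
def Bcal {H G : Type*} [Group H] [Group G] (Φ : G → H → H)
    (B₁ : H → H) (B₀ : G → G) (m : G × H) : G × H :=
  (B₀ m.1, Φ (B₀ m.1) (B₁ (Φ ((B₀ m.1)⁻¹ * m.1⁻¹) m.2)))

/-- The Yang-Baxter map `R(m,n) = (Ad_{B(m)}(n), Ad_{B(c)⁻¹·c⁻¹}(m))`, `c = Ad_{B(m)}(n)`,
written for an abstract multiplication `mul` and inversion `inv`. -/
def Rgen {X : Type*} (mul : X → X → X) (inv : X → X) (B : X → X) (z : X × X) : X × X :=
  let c := mul (mul (B z.1) z.2) (inv (B z.1))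
  let d := mul (inv (B c)) (inv c)
  (c, mul (mul d z.1) (inv d))

/-- Composition of morphisms in the category associated with a crossed module:
`(a,p) ∘ (b,q) = (b, p·q)` (defined when `t(q)·b = a`). -/
def catComp {H G : Type*} [Group H] (m n : G × H) : G × H := (n.1, m.2 * n.2)

theorem IsRotaBaxter.map_one {G : Type*} [Group G] {B : G → G} (hB : IsRotaBaxter B) :
    B 1 = 1 := by
  simpa using hB 1 1

namespace IsCrossedModule

variable {H G : Type*} [Group H] [Group G] {t : H → G} {Φ : G → H → H}

theorem act_one (hcm : IsCrossedModule t Φ) (a : G) : Φ a 1 = 1 := by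
  simpa using hcm.Φ_mul_hom a 1 1

theorem act_inv_t (hcm : IsCrossedModule t Φ) (p q : H) : Φ (t p)⁻¹ q = p⁻¹ * q * p := by
  apply (hcm.Φ_bij (t p)).injective
  rw [← hcm.Φ_mul, mul_inv_cancel, hcm.Φ_one, hcm.peiffer]
  group

end IsCrossedModule

section

variable {H G : Type*} [Group H] [Group G] {t : H → G} {Φ : G → H → H} {B₁ : H → H} {B₀ : G → G}

/-- With `q = Φ(B₀(a)⁻¹·a⁻¹)(p)`, the object part of `𝓑` at the target of `(a,p)` is
`B₀(a)·t(B₁(q))`. -/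
theorem IsCMRotaBaxter.map_target (hcm : IsCrossedModule t Φ) (hrb : IsCMRotaBaxter t Φ B₁ B₀)
    (a : G) (p : H) :
    B₀ (t p * a) = B₀ a * t (B₁ (Φ ((B₀ a)⁻¹ * a⁻¹) p)) := by
  rw [hrb.t_comm, hrb.rb₀, hcm.equivar]
  congr 1
  group

theorem t_Bcal_mul (hcm : IsCrossedModule t Φ) (hrb : IsCMRotaBaxter t Φ B₁ B₀) (m : G × H) :
    t (Bcal Φ B₁ B₀ m).2 * (Bcal Φ B₁ B₀ m).1 = B₀ (t m.2 * m.1) := by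
  simp [hrb.map_target hcm, Bcal, hcm.equivar]

theorem Bcal_one (hcm : IsCrossedModule t Φ) (hrb : IsCMRotaBaxter t Φ B₁ B₀) (a : G) :
    Bcal Φ B₁ B₀ (a, 1) = (B₀ a, 1) := by
  simp [Bcal, hcm.act_one, hrb.rb₁.map_one]

theorem catComp_Bcal (hcm : IsCrossedModule t Φ) (hrb : IsCMRotaBaxter t Φ B₁ B₀)
    (b : G) (h k : H) :
    catComp (Bcal Φ B₁ B₀ (t k * b, h)) (Bcal Φ B₁ B₀ (b, k)) =
      Bcal Φ B₁ B₀ (catComp (t k * b, h) (b, k)) := by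
  have htarget := hrb.map_target hcm b k
  set c := (B₀ b)⁻¹ * b⁻¹ with hc
  set q := Φ c k with hq
  have hact : Φ ((B₀ (t k * b))⁻¹ * (t k * b)⁻¹) h = (q * B₁ q)⁻¹ * Φ c h * (q * B₁ q) := by
    rw [← hcm.act_inv_t, ← hcm.Φ_mul, htarget, hcm.t_mul, hq, hcm.equivar c k, hc]
    congr 1
    group
  refine Prod.ext rfl ?_
  simp only [catComp, Bcal, ← hc, ← hq]
  rw [hact, htarget, hcm.Φ_mul, hcm.peiffer, ← hcm.Φ_mul_hom, inv_mul_cancel_right, hrb.rb₁,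
    hcm.Φ_mul_hom c h k, ← hq]
  congr 2
  group

end

theorem stmt12 {H G : Type*} [Group H] [Group G] (t : H → G) (Φ : G → H → H)
    (B₁ : H → H) (B₀ : G → G) (hcm : IsCrossedModule t Φ)
    (hrb : IsCMRotaBaxter t Φ B₁ B₀) :
    -- (1) 𝔰(𝓑(a,p)) = 𝓑₀(𝔰(a,p))
    (∀ m : G × H, (Bcal Φ B₁ B₀ m).1 = B₀ m.1) ∧
    -- (2) 𝔱(𝓑(a,p)) = 𝓑₀(𝔱(a,p))
    (∀ m : G × H, t (Bcal Φ B₁ B₀ m).2 * (Bcal Φ B₁ B₀ m).1 = B₀ (t m.2 * m.1)) ∧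
    -- (3) 𝓑 preserves identity morphisms
    (∀ a : G, Bcal Φ B₁ B₀ (a, (1 : H)) = (B₀ a, (1 : H))) ∧
    -- (4) 𝓑 preserves composition: whenever t(k)·b = a, the composite of
    -- 𝓑(a,h) and 𝓑(b,k) is defined and equals 𝓑((a,h) ∘ (b,k))
    (∀ (a b : G) (h k : H), t k * b = a →
      (t (Bcal Φ B₁ B₀ (b, k)).2 * (Bcal Φ B₁ B₀ (b, k)).1 = (Bcal Φ B₁ B₀ (a, h)).1 ∧
        catComp (Bcal Φ B₁ B₀ (a, h)) (Bcal Φ B₁ B₀ (b, k))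
          = Bcal Φ B₁ B₀ (catComp (a, h) (b, k)))) := by
  refine ⟨fun _ => rfl, t_Bcal_mul hcm hrb, Bcal_one hcm hrb, ?_⟩
  rintro _ b h k rfl
  exact ⟨t_Bcal_mul hcm hrb (b, k), catComp_Bcal hcm hrb b h k⟩
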